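/- arXiv:2504.02428 — 3 statements merged into one kernel-verified Lean document; each statement's English description precedes it below -/
import Mathlib

section
/- Let S be a stable semigroup. If S is DSC, then S is a group; that is, S has an identity element and every element of S has a two-sided inverse. -/
/-- A semigroup is DSC if every subsemigroup of `S × S` containing the
diagonal is symmetric and transitive, i.e. a congruence. -/
def IsDSC (S : Type*) [Mul S] : Prop :=
  ∀ ρ : Set (S × S),
    (∀ x : S, (x, x) ∈ ρ) →
    (∀ p q : S × S, p ∈ ρ → q ∈ ρ → p * q ∈ ρ) →
    ((∀ x y : S, ((x, y) : S × S) ∈ ρ → ((y, x) : S × S) ∈ ρ) ∧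
     (∀ x y z : S, ((x, y) : S × S) ∈ ρ → ((y, z) : S × S) ∈ ρ →
        ((x, z) : S × S) ∈ ρ))

/-- A semigroup is a group if it has a (two-sided) identity element with
respect to which every element has a two-sided inverse. -/
def IsGroupSG (S : Type*) [Mul S] : Prop :=
  ∃ e : S, (∀ s : S, e * s = s ∧ s * e = s) ∧
    ∀ s : S, ∃ t : S, s * t = e ∧ t * s = e

/-- `x ∈ y S¹`, i.e. `x = y` or `x = y u` for some `u ∈ S`. -/
def MemRightIdeal {S : Type*} [Mul S] (x y : S) : Prop :=
  x = y ∨ ∃ u : S, x = y * u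

/-- `x ∈ S¹ y`. -/
def MemLeftIdeal {S : Type*} [Mul S] (x y : S) : Prop :=
  x = y ∨ ∃ u : S, x = u * y

/-- `x ∈ S¹ y S¹`. -/
def MemTwoSidedIdeal {S : Type*} [Mul S] (x y : S) : Prop :=
  x = y ∨ (∃ u : S, x = u * y) ∨ (∃ v : S, x = y * v) ∨
    (∃ u v : S, x = u * y * v)

/-- Green's relation `R`: `x R y` iff `x S¹ = y S¹`. -/
def GreenR {S : Type*} [Mul S] (x y : S) : Prop :=
  MemRightIdeal x y ∧ MemRightIdeal y x

/-- Green's relation `L`: `x L y` iff `S¹ x = S¹ y`. -/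
def GreenL {S : Type*} [Mul S] (x y : S) : Prop :=
  MemLeftIdeal x y ∧ MemLeftIdeal y x

/-- Green's relation `J`: `x J y` iff `S¹ x S¹ = S¹ y S¹`. -/
def GreenJ {S : Type*} [Mul S] (x y : S) : Prop :=
  MemTwoSidedIdeal x y ∧ MemTwoSidedIdeal y x

/-!
The Rees relation `{(x, y) | x = y ∨ x ∈ I}` of an ideal `I` is a diagonal subsemigroup, and it is
symmetric only if `I` is empty or all of `S`; hence `S` is simple, that is, all its elements are
`J`-related. By stability `x R x * s` for all `x` and `s`, so `x * s` lies in a right ideal `A`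
exactly when `x` does, which makes `{(x, y) | y ∈ A → x ∈ A}` a diagonal subsemigroup. Its symmetry
forces `A = S` for nonempty `A`, so `S` is right simple. Dually `S` is left simple, hence a group.
-/

/-- A weakening of DSC: every diagonal subsemigroup of `S × S` is symmetric, but not necessarily
transitive. Subsemigroups of `S × S` are encoded as compatible relations on `S`. -/
def IsDiagonalSymmetric (S : Type*) [Mul S] : Prop :=
  ∀ r : S → S → Prop, (∀ x, r x x) →
    (∀ ⦃x x' y y'⦄, r x x' → r y y' → r (x * y) (x' * y')) →
    ∀ ⦃x y⦄, r x y → r y x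

theorem IsDSC.isDiagonalSymmetric {S : Type*} [Mul S] (h : IsDSC S) : IsDiagonalSymmetric S :=
  fun r hrefl hmul x y =>
    (h {p | r p.1 p.2} hrefl fun _ _ hp hq => hmul hp hq).1 x y

namespace IsDiagonalSymmetric

section Mul

variable {S : Type*} [Mul S]

theorem mem_of_ideal (h : IsDiagonalSymmetric S) {I : Set S}
    (mul_mem_left : ∀ s, ∀ x ∈ I, s * x ∈ I) (mul_mem_right : ∀ s, ∀ x ∈ I, x * s ∈ I)
    (hI : I.Nonempty) (y : S) : y ∈ I := by
  obtain ⟨a, ha⟩ := hI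
  have rees_mul : ∀ ⦃x x' y y' : S⦄, (x = x' ∨ x ∈ I) → (y = y' ∨ y ∈ I) →
      (x * y = x' * y' ∨ x * y ∈ I) := by
    rintro x _ y _ (rfl | hx) (rfl | hy)
    · exact .inl rfl
    · exact .inr (mul_mem_left x y hy)
    · exact .inr (mul_mem_right y x hx)
    · exact .inr (mul_mem_left x y hy)
  rcases h (fun x y => x = y ∨ x ∈ I) (fun _ => .inl rfl) rees_mul (.inr ha : a = y ∨ a ∈ I)
    with rfl | hy
  · exact ha
  · exact hy

theorem mem_of_mul_mem_iff_left (h : IsDiagonalSymmetric S) {A : Set S}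
    (hmul : ∀ x s, x * s ∈ A ↔ x ∈ A) (hA : A.Nonempty) (y : S) : y ∈ A := by
  obtain ⟨a, ha⟩ := hA
  refine h (fun x y => y ∈ A → x ∈ A) (fun _ => id) ?_ (fun _ : y ∈ A => ha) ha
  intro x x' y y' hx _
  simpa only [hmul] using hx

theorem mem_of_mul_mem_iff_right (h : IsDiagonalSymmetric S) {A : Set S}
    (hmul : ∀ s x, s * x ∈ A ↔ x ∈ A) (hA : A.Nonempty) (y : S) : y ∈ A := by
  obtain ⟨a, ha⟩ := hA
  refine h (fun x y => y ∈ A → x ∈ A) (fun _ => id) ?_ (fun _ : y ∈ A => ha) ha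
  intro x x' y y' _ hy
  simpa only [hmul] using hy

end Mul

section Semigroup

variable {S : Type*} [Semigroup S]

theorem exists_mul_mul_eq (h : IsDiagonalSymmetric S) (a y : S) : ∃ u v, u * a * v = y := by
  refine h.mem_of_ideal (I := {y | ∃ u v, u * a * v = y}) ?_ ?_ ⟨a * a * a, a, a, rfl⟩ y
  · rintro s _ ⟨u, v, rfl⟩
    exact ⟨s * u, v, by simp only [mul_assoc]⟩
  · rintro s _ ⟨u, v, rfl⟩
    exact ⟨u, v * s, by simp only [mul_assoc]⟩

theorem greenJ (h : IsDiagonalSymmetric S) (x y : S) : GreenJ x y := by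
  have mem (x y : S) : MemTwoSidedIdeal x y := by
    obtain ⟨u, v, huv⟩ := h.exists_mul_mul_eq y x
    exact .inr (.inr (.inr ⟨u, v, huv.symm⟩))
  exact ⟨mem x y, mem y x⟩

theorem mul_left_surjective (h : IsDiagonalSymmetric S)
    (hR : ∀ x s : S, MemRightIdeal x (x * s)) (a : S) : Function.Surjective (a * ·) := by
  refine h.mem_of_mul_mem_iff_left (A := Set.range (a * ·)) (fun x s => ⟨?_, ?_⟩) ⟨a * a, a, rfl⟩
  · rintro ⟨u, hu : a * u = x * s⟩
    rcases hR x s with hx | ⟨v, hx⟩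
    · exact ⟨u, hu.trans hx.symm⟩
    · exact ⟨u * v, by rw [hx, ← hu]; exact (mul_assoc a u v).symm⟩
  · rintro ⟨u, rfl⟩
    exact ⟨u * s, (mul_assoc a u s).symm⟩

theorem mul_right_surjective (h : IsDiagonalSymmetric S)
    (hL : ∀ s x : S, MemLeftIdeal x (s * x)) (a : S) : Function.Surjective (· * a) := by
  refine h.mem_of_mul_mem_iff_right (A := Set.range (· * a)) (fun s x => ⟨?_, ?_⟩) ⟨a * a, a, rfl⟩
  · rintro ⟨u, hu : u * a = s * x⟩
    rcases hL s x with hx | ⟨v, hx⟩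
    · exact ⟨u, hu.trans hx.symm⟩
    · exact ⟨v * u, by rw [hx, ← hu]; exact mul_assoc v u a⟩
  · rintro ⟨u, rfl⟩
    exact ⟨s * u, mul_assoc s u a⟩

end Semigroup

end IsDiagonalSymmetric

section IsGroupSG

variable {S : Type*} [Semigroup S]

theorem isGroupSG_of_left_axioms {e : S} (left_id : ∀ s, e * s = s)
    (exists_left_inv : ∀ s, ∃ t, t * s = e) : IsGroupSG S := by
  choose inv inv_mul using exists_left_inv
  let : One S := ⟨e⟩
  let : Inv S := ⟨inv⟩
  let : Group S := Group.ofLeftAxioms mul_assoc left_id inv_mul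
  exact ⟨1, fun s => ⟨one_mul s, mul_one s⟩, fun s => ⟨s⁻¹, mul_inv_cancel s, inv_mul_cancel s⟩⟩

theorem isGroupSG_of_mul_surjective [Nonempty S]
    (hleft : ∀ a : S, Function.Surjective (a * ·))
    (hright : ∀ a : S, Function.Surjective (· * a)) : IsGroupSG S := by
  obtain ⟨a⟩ := ‹Nonempty S›
  obtain ⟨e, he : e * a = a⟩ := hright a a
  have left_id (s : S) : e * s = s := by
    obtain ⟨u, rfl⟩ := hleft a s
    change e * (a * u) = a * u
    rw [← mul_assoc, he]
  exact isGroupSG_of_left_axioms left_id fun s => hright s e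

end IsGroupSG

theorem stable_DSC_group_general {S : Type*} [Semigroup S] [Nonempty S]
    (hstable : ∀ s x : S,
      (GreenJ x (s * x) → GreenL x (s * x)) ∧
      (GreenJ x (x * s) → GreenR x (x * s)))
    (h : IsDiagonalSymmetric S) : IsGroupSG S :=
  isGroupSG_of_mul_surjective
    (h.mul_left_surjective fun x s => ((hstable s x).2 (h.greenJ x (x * s))).1)
    (h.mul_right_surjective fun s x => ((hstable s x).1 (h.greenJ x (s * x))).1)

/-- a stable DSC semigroup is a group. -/
theorem stable_DSC_group {S : Type*} [Semigroup S] [Nonempty S]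
    (hstable : ∀ s x : S,
      (GreenJ x (s * x) → GreenL x (s * x)) ∧
      (GreenJ x (x * s) → GreenR x (x * s)))
    (h : IsDSC S) : IsGroupSG S :=
  stable_DSC_group_general hstable h.isDiagonalSymmetric
end

section
/- Let S be a finite nonempty semigroup. Then S is DSC if and only if S is a group (i.e., S has an identity element and every element of S has a two-sided inverse). -/
/-!
In a DSC semigroup `S` the symmetry of two kinds of diagonal subsemigroups does all the work.
* If `I` is a two-sided ideal, `{(x, y) | x = y ∨ x ∈ I}` is a diagonal subsemigroup, and its
  symmetry forces `I` to be empty or all of `S`; hence `S` is simple.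
* If `R` satisfies `y * z ∈ R ↔ y ∈ R`, then `{(x, y) | y ∈ R → x ∈ R}` is a diagonal
  subsemigroup, and its symmetry forces `R` to be empty or all of `S`. A periodic semigroup is
  stable, so if `S` is periodic every right ideal `a * S` of the simple semigroup `S` is such a set;
  hence `S` is right simple.

The same holds for the opposite semigroup, and a nonempty left and right simple semigroup is a
group. Conversely, a subsemigroup of a periodic group is closed under inverses. For a diagonal
subsemigroup this gives symmetry by `(y, x) = (x, x) * (x, y)⁻¹ * (y, y)`, and transitivity holds in
any group by `(x, z) = (x, y) * (y⁻¹, y⁻¹) * (y, z)`.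
-/

/-- A semigroup is periodic if each of its monogenic subsemigroups is finite. -/
def IsPeriodicSG (S : Type*) [Mul S] : Prop :=
  ∀ a : S, (Subsemigroup.closure {a} : Set S).Finite

/-- Right stability, one half of stability in the sense of Green's relations: if `y` and `y * z`
generate the same two-sided ideal, then they generate the same right ideal. Adjoining an identity to
`S` in the hypothesis or in the conclusion gives an equivalent condition. -/
def IsRightStable (S : Type*) [Mul S] : Prop :=
  ∀ y z p q : S, p * (y * z) * q = y → ∃ t, y * z * t = y

section Periodic

open Subsemigroup

theorem exists_mem_isIdempotentElem_mul {S : Type*} [Semigroup S] {T : Subsemigroup S}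
    (hT : (T : Set S).Finite) {w : S} (hw : w ∈ T) : ∃ s ∈ T, IsIdempotentElem (w * s) := by
  let : TopologicalSpace S := ⊥
  have : DiscreteTopology S := ⟨rfl⟩
  have mul_closed : ∀ᵉ (x ∈ (w * ·) '' (T : Set S)) (y ∈ (w * ·) '' (T : Set S)),
      x * y ∈ (w * ·) '' (T : Set S) := by
    rintro _ ⟨s, hs, rfl⟩ _ ⟨t, ht, rfl⟩
    exact ⟨s * (w * t), T.mul_mem hs (T.mul_mem hw ht), by simp only [mul_assoc]⟩
  obtain ⟨_, ⟨s, hs, rfl⟩, he⟩ := exists_idempotent_in_compact_subsemigroup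
    (fun _ => continuous_of_discreteTopology) _ (Set.Nonempty.image _ ⟨w, hw⟩)
    (hT.image _).isCompact mul_closed
  exact ⟨s, hs, he⟩

theorem isPeriodicSG_of_finite {S : Type*} [Mul S] [Finite S] : IsPeriodicSG S :=
  fun _ => Set.toFinite _

namespace IsPeriodicSG

theorem op {S : Type*} [Mul S] (hS : IsPeriodicSG S) : IsPeriodicSG Sᵐᵒᵖ := fun a =>
  ((hS a.unop).preimage MulOpposite.unop_injective.injOn).subset <|
    (closure_singleton_le_iff_mem a (closure {a.unop}).op).2 (subset_closure rfl)

theorem prod {S T : Type*} [Mul S] [Mul T] (hS : IsPeriodicSG S) (hT : IsPeriodicSG T) :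
    IsPeriodicSG (S × T) := fun a =>
  ((hS a.1).prod (hT a.2)).subset <|
    (closure_singleton_le_iff_mem a ((closure {a.1}).prod (closure {a.2}))).2
      ⟨subset_closure rfl, subset_closure rfl⟩

theorem isRightStable {S : Type*} [Semigroup S] (hS : IsPeriodicSG S) : IsRightStable S := by
  intro y z p q hy
  let T : Subsemigroup S :=
    { carrier := {r | ∃ l, l * y * r = y}
      mul_mem' := by
        rintro r r' ⟨l, hl⟩ ⟨l', hl'⟩
        exact ⟨l' * l, by rw [← mul_assoc, mul_assoc l', mul_assoc l', hl, hl']⟩ }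
  have hT : closure {z * q} ≤ T :=
    (closure_singleton_le_iff_mem _ _).2 ⟨p, by simpa only [mul_assoc] using hy⟩
  have hzq : z * q ∈ closure {z * q} := subset_closure rfl
  obtain ⟨s, hs, he⟩ := exists_mem_isIdempotentElem_mul (hS (z * q)) hzq
  obtain ⟨l, hl⟩ : z * q * s ∈ T := hT (mul_mem hzq hs)
  have hfix : y * (z * q * s) = y := by
    calc y * (z * q * s) = l * y * (z * q * s) * (z * q * s) := by rw [hl]
      _ = y := by rw [mul_assoc, he.eq, hl]
  exact ⟨q * s, by simpa only [mul_assoc] using hfix⟩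

theorem inv_mem {G : Type*} [Group G] (hG : IsPeriodicSG G) {T : Subsemigroup G} {x : G}
    (hx : x ∈ T) : x⁻¹ ∈ T := by
  obtain ⟨s, hs, he⟩ := exists_mem_isIdempotentElem_mul (hG x) (subset_closure rfl)
  rw [inv_eq_of_mul_eq_one_right (IsIdempotentElem.iff_eq_one.1 he)]
  exact (closure_singleton_le_iff_mem x T).2 hx hs

theorem isDSC {G : Type*} [Group G] (hG : IsPeriodicSG G) : IsDSC G := by
  intro ρ hdiag hmul
  let T : Subsemigroup (G × G) := ⟨ρ, fun {p q} => hmul p q⟩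
  refine ⟨fun x y hxy => ?_, fun x y z hxy hyz => ?_⟩
  · have hinv : (x⁻¹, y⁻¹) ∈ ρ := (hG.prod hG).inv_mem (T := T) hxy
    simpa using hmul _ _ (hmul _ _ (hdiag x) hinv) (hdiag y)
  · simpa using hmul _ _ (hmul _ _ hxy (hdiag y⁻¹)) hyz

end IsPeriodicSG

end Periodic

namespace IsDSC

theorem op {S : Type*} [Mul S] (h : IsDSC S) : IsDSC Sᵐᵒᵖ := by
  intro ρ hdiag hmul
  have hρ := h {x | (MulOpposite.op x.1, MulOpposite.op x.2) ∈ ρ} (fun _ => hdiag _)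
    (fun _ _ hp hq => hmul _ _ hq hp)
  exact ⟨fun x y => hρ.1 x.unop y.unop, fun x y z => hρ.2 x.unop y.unop z.unop⟩

theorem eq_univ_of_ideal {S : Type*} [Mul S] (h : IsDSC S) {I : Set S} (hne : I.Nonempty)
    (hleft : ∀ a, ∀ x ∈ I, a * x ∈ I) (hright : ∀ a, ∀ x ∈ I, x * a ∈ I) : I = Set.univ := by
  obtain ⟨r, hr⟩ := hne
  refine Set.eq_univ_of_forall fun s => ?_
  have hsymm := (h {x | x.1 = x.2 ∨ x.1 ∈ I} (fun _ => Or.inl rfl) ?_).1 r s (Or.inr hr)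
  · rcases hsymm with (rfl : s = r) | hs
    exacts [hr, hs]
  · rintro ⟨a, b⟩ ⟨c, d⟩ ((rfl : a = b) | ha) ((rfl : c = d) | hc)
    exacts [Or.inl rfl, Or.inr (hleft a c hc), Or.inr (hright c a ha), Or.inr (hright c a ha)]

theorem eq_univ_of_mul_mem_iff {S : Type*} [Mul S] (h : IsDSC S) {R : Set S} (hne : R.Nonempty)
    (hR : ∀ y z, y * z ∈ R ↔ y ∈ R) : R = Set.univ := by
  obtain ⟨r, hr⟩ := hne
  refine Set.eq_univ_of_forall fun s => ?_
  refine (h {x | x.2 ∈ R → x.1 ∈ R} (fun _ => id) ?_).1 r s (fun _ => hr) hr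
  intro p q hp _ hpq
  exact (hR p.1 q.1).2 (hp ((hR p.2 q.2).1 hpq))

theorem exists_mul_mul_eq {S : Type*} [Semigroup S] (h : IsDSC S) (a s : S) :
    ∃ p q, p * a * q = s := by
  have huniv : {x | ∃ p q, p * a * q = x} = Set.univ := by
    refine h.eq_univ_of_ideal ⟨a * a * a, a, a, rfl⟩ ?_ ?_
    · rintro b _ ⟨p, q, rfl⟩
      exact ⟨b * p, q, by simp only [mul_assoc]⟩
    · rintro b _ ⟨p, q, rfl⟩
      exact ⟨p, q * b, by simp only [mul_assoc]⟩
  exact Set.eq_univ_iff_forall.1 huniv s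

theorem exists_mul_right_eq {S : Type*} [Semigroup S] (h : IsDSC S) (hS : IsRightStable S)
    (a s : S) : ∃ t, a * t = s := by
  have huniv : Set.range (a * ·) = Set.univ := by
    refine h.eq_univ_of_mul_mem_iff ⟨a * a, a, rfl⟩ fun y z => ⟨?_, ?_⟩
    · rintro ⟨t, ht : a * t = y * z⟩
      obtain ⟨p, q, hpq⟩ := h.exists_mul_mul_eq (y * z) y
      obtain ⟨u, hu⟩ := hS y z p q hpq
      exact ⟨t * u, by simp only [← mul_assoc, ht, hu]⟩
    · rintro ⟨t, rfl⟩
      exact ⟨t * z, (mul_assoc a t z).symm⟩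
  exact Set.range_eq_univ.1 huniv s

theorem exists_mul_left_eq {S : Type*} [Semigroup S] (h : IsDSC S) (hS : IsRightStable Sᵐᵒᵖ)
    (a s : S) : ∃ t, t * a = s := by
  obtain ⟨t, ht⟩ := h.op.exists_mul_right_eq hS (MulOpposite.op a) (MulOpposite.op s)
  exact ⟨t.unop, congrArg MulOpposite.unop ht⟩

end IsDSC

theorem isGroupSG_of_group {G : Type*} [Group G] : IsGroupSG G :=
  ⟨1, fun s => ⟨one_mul s, mul_one s⟩, fun s => ⟨s⁻¹, mul_inv_cancel s, inv_mul_cancel s⟩⟩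

theorem isGroupSG_of_exists_mul_eq {S : Type*} [Semigroup S] [Nonempty S]
    (hright : ∀ a s : S, ∃ t, a * t = s) (hleft : ∀ a s : S, ∃ t, t * a = s) : IsGroupSG S := by
  obtain ⟨a⟩ := ‹Nonempty S›
  obtain ⟨e, he⟩ := hleft a a
  have one_mul (s : S) : e * s = s := by
    obtain ⟨t, rfl⟩ := hright a s
    rw [← mul_assoc, he]
  choose inv inv_mul_cancel using fun s => hleft s e
  let : One S := ⟨e⟩
  let : Inv S := ⟨inv⟩
  let : Group S := Group.ofLeftAxioms mul_assoc one_mul inv_mul_cancel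
  exact isGroupSG_of_group (G := S)

theorem IsGroupSG.isDSC {S : Type*} [Semigroup S] (h : IsGroupSG S) (hS : IsPeriodicSG S) :
    IsDSC S := by
  obtain ⟨e, he, hinv⟩ := h
  choose inv hinv using hinv
  let : One S := ⟨e⟩
  let : Inv S := ⟨inv⟩
  let : Group S :=
    Group.ofLeftAxioms mul_assoc (fun s => (he s).1) (fun s => (hinv s).2)
  exact IsPeriodicSG.isDSC (G := S) hS

theorem finite_DSC_iff_group_general {S : Type*} [Semigroup S] [Nonempty S]
    (hS : IsPeriodicSG S) : IsDSC S ↔ IsGroupSG S :=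
  ⟨fun h => isGroupSG_of_exists_mul_eq (h.exists_mul_right_eq hS.isRightStable)
    (h.exists_mul_left_eq hS.op.isRightStable), fun h => h.isDSC hS⟩

/-- a finite nonempty semigroup is DSC iff it is a group. -/
theorem finite_DSC_iff_group {S : Type*} [Semigroup S] [Finite S] [Nonempty S] :
    IsDSC S ↔ IsGroupSG S :=
  finite_DSC_iff_group_general isPeriodicSG_of_finite
end

section
/- For any monoid S and any monoid endomorphism θ of S, the Bruck–Reilly extension BR(S,θ) is not DSC. -/
/-- DSC property for a multiplication given explicitly as a function: every
subset of `S × S` containing the diagonal and closed under the (coordinatewise)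
multiplication is symmetric and transitive, i.e. a congruence. -/
def IsDSCOf {S : Type*} (mul : S → S → S) : Prop :=
  ∀ ρ : Set (S × S),
    (∀ x : S, (x, x) ∈ ρ) →
    (∀ p q : S × S, p ∈ ρ → q ∈ ρ → (mul p.1 q.1, mul p.2 q.2) ∈ ρ) →
    ((∀ x y : S, ((x, y) : S × S) ∈ ρ → ((y, x) : S × S) ∈ ρ) ∧
     (∀ x y z : S, ((x, y) : S × S) ∈ ρ → ((y, z) : S × S) ∈ ρ →
        ((x, z) : S × S) ∈ ρ))

/-- Multiplication of the Bruck--Reilly extension `BR(S, θ)` on `ℕ × S × ℕ`: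
`(m, s, n)(p, t, q) = (m - n + k, (s θ^{k-n})(t θ^{k-p}), q - p + k)` with
`k = max n p` (written so that all subtractions are non-negative). -/
def bruckReillyMul {S : Type*} [Monoid S] (θ : S →* S) :
    ℕ × S × ℕ → ℕ × S × ℕ → ℕ × S × ℕ :=
  fun x y =>
    (x.1 + (max x.2.2 y.1 - x.2.2),
     (⇑θ)^[max x.2.2 y.1 - x.2.2] x.2.1 * (⇑θ)^[max x.2.2 y.1 - y.1] y.2.1,
     y.2.2 + (max x.2.2 y.1 - y.1))

/-!
Forgetting the middle coordinate maps `BR(S, θ)` onto the bicyclic monoid, and the DSC property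
passes to quotients. In the bicyclic monoid, as in every inverse semigroup, the natural partial
order is a diagonal subsemigroup, so under DSC it would have to be symmetric, hence trivial; but
`(1, 1) < (0, 0)`.
-/

theorem IsDSCOf.symm_of_compatible {T : Type*} {mul : T → T → T} (h : IsDSCOf mul)
    {r : T → T → Prop} (hrefl : ∀ x, r x x)
    (hmul : ∀ {x x' y y'}, r x x' → r y y' → r (mul x y) (mul x' y')) {x y : T} (hxy : r x y) :
    r y x :=
  (h {p | r p.1 p.2} hrefl fun _ _ => hmul).1 x y hxy

theorem IsDSCOf.of_surjective {T U : Type*} {mulT : T → T → T} {mulU : U → U → U}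
    (h : IsDSCOf mulT) {f : T → U} (hf : Function.Surjective f)
    (map_mul : ∀ x y, f (mulT x y) = mulU (f x) (f y)) : IsDSCOf mulU := by
  intro ρ hrefl hmul
  obtain ⟨hsymm, htrans⟩ := h (Prod.map f f ⁻¹' ρ) (fun x => hrefl (f x)) fun p q hp hq => by
    simpa only [Set.mem_preimage, Prod.map, map_mul] using hmul _ _ hp hq
  exact ⟨hf.forall₂.2 hsymm, hf.forall₃.2 htrans⟩

/-- Multiplication of the bicyclic monoid `⟨b, c | b * c = 1⟩`, with `(m, n)` standing for the
normal form `c ^ m * b ^ n`. -/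
def bicyclicMul (x y : ℕ × ℕ) : ℕ × ℕ :=
  (x.1 + (max x.2 y.1 - x.2), y.2 + (max x.2 y.1 - y.1))

/-- The natural partial order of the bicyclic monoid as an inverse semigroup: the idempotents are
the pairs `(k, k)`, and the elements below `y`, being its multiples by idempotents, are the
`y + (k, k)`. -/
def BicyclicLE (x y : ℕ × ℕ) : Prop :=
  ∃ k, x = y + (k, k)

theorem BicyclicLE.refl (x : ℕ × ℕ) : BicyclicLE x x :=
  ⟨0, rfl⟩

theorem BicyclicLE.mul {x x' y y' : ℕ × ℕ} (hx : BicyclicLE x x') (hy : BicyclicLE y y') :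
    BicyclicLE (bicyclicMul x y) (bicyclicMul x' y') := by
  obtain ⟨k, rfl⟩ := hx
  obtain ⟨l, rfl⟩ := hy
  refine ⟨max (x'.2 + k) (y'.1 + l) - max x'.2 y'.1, ?_⟩
  ext <;> simp only [bicyclicMul, Prod.fst_add, Prod.snd_add] <;> omega

theorem not_isDSCOf_bicyclicMul : ¬ IsDSCOf bicyclicMul := by
  intro h
  have below_one : BicyclicLE (1, 1) (0, 0) := ⟨1, rfl⟩
  obtain ⟨k, hk⟩ : BicyclicLE (0, 0) (1, 1) :=
    h.symm_of_compatible BicyclicLE.refl BicyclicLE.mul below_one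
  have : 0 = 1 + k := congrArg Prod.fst hk
  omega

/-- The projection of `BR(S, θ)` onto the bicyclic monoid. -/
def bruckReillyToBicyclic {S : Type*} (x : ℕ × S × ℕ) : ℕ × ℕ :=
  (x.1, x.2.2)

theorem bruckReillyToBicyclic_surjective {S : Type*} [Nonempty S] :
    Function.Surjective (bruckReillyToBicyclic (S := S)) :=
  fun x => ⟨(x.1, Classical.arbitrary S, x.2), rfl⟩

theorem bruckReillyToBicyclic_mul {S : Type*} [Monoid S] (θ : S →* S) (x y : ℕ × S × ℕ) :
    bruckReillyToBicyclic (bruckReillyMul θ x y) =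
      bicyclicMul (bruckReillyToBicyclic x) (bruckReillyToBicyclic y) :=
  rfl

/-- for any monoid `S` and monoid endomorphism `θ` of `S`, the
Bruck--Reilly extension `BR(S, θ)` is not DSC. -/
theorem bruckReilly_not_DSC {S : Type*} [Monoid S] (θ : S →* S) :
    ¬ IsDSCOf (bruckReillyMul θ) := by
  intro h
  exact not_isDSCOf_bicyclicMul
    (h.of_surjective bruckReillyToBicyclic_surjective (bruckReillyToBicyclic_mul θ))
end
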